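/- Let a, b, c, d be vertices of a convex polygon P in clockwise order. Then at least one of the following holds: (1) dist(a,x) > dist(a,d) for every vertex x of P strictly between c and d (in clockwise order from c to d) and for x = c; (2) dist(b,x) > dist(b,c) for every vertex x of P strictly between c and d and for x = d; (3) dist(c,x) > dist(b,c) for every vertex x of P strictly between a and b and for x = a; (4) dist(d,x) > dist(a,d) for every vertex x of P strictly between a and b and for x = b. -/

import Mathlib

/-- The cross product (signed area determinant) of two vectors in the Euclidean plane. -/
noncomputable def cross2 (u v : EuclideanSpace ℝ (Fin 2)) : ℝ := u 0 * v 1 - u 1 * v 0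

/-- The vertices `P 0, P 1, …` form a convex polygon listed in clockwise order:
every triple of vertices in index order is a clockwise turn. -/
def ClockwiseConvexPos {n : ℕ} (P : Fin n → EuclideanSpace ℝ (Fin 2)) : Prop :=
  ∀ i j k : Fin n, i < j → j < k → cross2 (P j - P i) (P k - P i) < 0

lemma far_aux (s : ℝ) (p q c x : EuclideanSpace ℝ (Fin 2))
    (hd : (p 0 - q 0) * (c 0 - q 0) + (p 1 - q 1) * (c 1 - q 1) ≤ 0)
    (h1 : 0 < s * cross2 (p - q) (c - q))
    (h2 : 0 < s * cross2 (p - q) (x - q))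
    (h3 : 0 ≤ s * cross2 (c - q) (x - q)) : dist p q < dist p x := by
  rw [EuclideanSpace.dist_eq, EuclideanSpace.dist_eq]
  apply Real.sqrt_lt_sqrt (by positivity)
  simp only [Fin.sum_univ_two, Real.dist_eq, sq_abs]
  simp only [cross2, PiLp.sub_apply] at h1 h2 h3
  have key : (p 0 - q 0) * (x 0 - q 0) + (p 1 - q 1) * (x 1 - q 1) ≤ 0 := by
    by_contra hc
    push Not at hc
    have e1 := mul_pos h1 hc
    have e2 := mul_nonneg (neg_nonneg.2 hd) h2.le
    have e3 := mul_nonneg (add_nonneg (sq_nonneg (p 0 - q 0)) (sq_nonneg (p 1 - q 1))) h3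
    nlinarith
  have hx : 0 < (x 0 - q 0) ^ 2 + (x 1 - q 1) ^ 2 := by
    by_contra hc
    have a0 : x 0 - q 0 = 0 := by nlinarith [sq_nonneg (x 0 - q 0), sq_nonneg (x 1 - q 1)]
    have a1 : x 1 - q 1 = 0 := by nlinarith [sq_nonneg (x 0 - q 0), sq_nonneg (x 1 - q 1)]
    rw [a0, a1] at h2
    simp at h2
  nlinarith

lemma turn_aux (u0 u1 v0 v1 w0 w1 : ℝ) (h1 : u0 * v1 - u1 * v0 < 0) (h2 : v0 * w1 - v1 * w0 < 0)
    (h3 : u0 * v0 + u1 * v1 < 0) (h4 : v0 * w0 + v1 * w1 < 0) : 0 < u0 * w1 - u1 * w0 := by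
  have e1 := mul_pos_of_neg_of_neg h1 h4
  have e2 := mul_pos_of_neg_of_neg h3 h2
  by_contra hc
  push Not at hc
  have e3 := mul_nonneg (add_nonneg (sq_nonneg v0) (sq_nonneg v1)) (neg_nonneg.2 hc)
  nlinarith

/-- Fact 2: for vertices `a = P ia, b = P ib, c = P ic, d = P idd` of a convex polygon
in clockwise order, at least one of the four stated cases occurs. -/
theorem stmt3 {n : ℕ} (P : Fin n → EuclideanSpace ℝ (Fin 2)) (hP : ClockwiseConvexPos P)
    (ia ib ic idd : Fin n) (h1 : ia < ib) (h2 : ib < ic) (h3 : ic < idd) :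
    (∀ x : Fin n, ic ≤ x → x < idd → dist (P ia) (P idd) < dist (P ia) (P x)) ∨
    (∀ x : Fin n, ic < x → x ≤ idd → dist (P ib) (P ic) < dist (P ib) (P x)) ∨
    (∀ x : Fin n, ia ≤ x → x < ib → dist (P ib) (P ic) < dist (P ic) (P x)) ∨
    (∀ x : Fin n, ia < x → x ≤ ib → dist (P ia) (P idd) < dist (P idd) (P x)) := by
  have habc := hP ia ib ic h1 h2
  have habd := hP ia ib idd h1 (h2.trans h3)
  have hacd := hP ia ic idd (h1.trans h2) h3
  have hbcd := hP ib ic idd h2 h3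
  by_cases hD : (P ia 0 - P idd 0) * (P ic 0 - P idd 0)
      + (P ia 1 - P idd 1) * (P ic 1 - P idd 1) ≤ 0
  · left
    intro x hx hx'
    have t1 := hP ia x idd ((h1.trans h2).trans_le hx) hx'
    refine far_aux (-1) _ _ _ _ hD ?_ ?_ ?_
    · simp only [cross2, PiLp.sub_apply] at *; linarith
    · simp only [cross2, PiLp.sub_apply] at *; linarith
    · rcases hx.eq_or_lt with rfl | hx
      · simp only [cross2, PiLp.sub_apply] at *; linarith
      · have t2 := hP ic x idd hx hx'
        simp only [cross2, PiLp.sub_apply] at *; linarith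
  by_cases hC : (P ib 0 - P ic 0) * (P idd 0 - P ic 0)
      + (P ib 1 - P ic 1) * (P idd 1 - P ic 1) ≤ 0
  · right; left
    intro x hx hx'
    have t1 := hP ib ic x h2 hx
    refine far_aux 1 _ _ _ _ hC ?_ ?_ ?_
    · simp only [cross2, PiLp.sub_apply] at *; linarith
    · simp only [cross2, PiLp.sub_apply] at *; linarith
    · rcases hx'.eq_or_lt with rfl | hx'
      · simp only [cross2, PiLp.sub_apply] at *; linarith
      · have t2 := hP ic x idd hx hx'
        simp only [cross2, PiLp.sub_apply] at *; linarith
  by_cases hB : (P ic 0 - P ib 0) * (P ia 0 - P ib 0)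
      + (P ic 1 - P ib 1) * (P ia 1 - P ib 1) ≤ 0
  · right; right; left
    intro x hx hx'
    have t1 := hP x ib ic hx' h2
    rw [dist_comm (P ib)]
    refine far_aux (-1) _ _ _ _ hB ?_ ?_ ?_
    · simp only [cross2, PiLp.sub_apply] at *; linarith
    · simp only [cross2, PiLp.sub_apply] at *; linarith
    · rcases hx.eq_or_lt with rfl | hx
      · simp only [cross2, PiLp.sub_apply] at *; linarith
      · have t2 := hP ia x ib hx hx'
        simp only [cross2, PiLp.sub_apply] at *; linarith
  by_cases hA : (P idd 0 - P ia 0) * (P ib 0 - P ia 0)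
      + (P idd 1 - P ia 1) * (P ib 1 - P ia 1) ≤ 0
  · right; right; right
    intro x hx hx'
    have t1 := hP ia x idd hx (hx'.trans_lt (h2.trans h3))
    rw [dist_comm (P ia)]
    refine far_aux 1 _ _ _ _ hA ?_ ?_ ?_
    · simp only [cross2, PiLp.sub_apply] at *; linarith
    · simp only [cross2, PiLp.sub_apply] at *; linarith
    · rcases hx'.eq_or_lt with rfl | hx'
      · simp only [cross2, PiLp.sub_apply] at *; linarith
      · have t2 := hP ia x ib hx hx'
        simp only [cross2, PiLp.sub_apply] at *; linarith
  exfalso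
  simp only [cross2, PiLp.sub_apply] at habc habd hacd hbcd
  push Not at hA hB hC hD
  have k1 := turn_aux (P ib 0 - P ia 0) (P ib 1 - P ia 1) (P ic 0 - P ib 0) (P ic 1 - P ib 1)
    (P idd 0 - P ic 0) (P idd 1 - P ic 1) (by linarith) (by linarith) (by linarith) (by linarith)
  have k2 := turn_aux (P idd 0 - P ic 0) (P idd 1 - P ic 1) (P ia 0 - P idd 0) (P ia 1 - P idd 1)
    (P ib 0 - P ia 0) (P ib 1 - P ia 1) (by linarith) (by linarith) (by linarith) (by linarith)
  linarith
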